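/- Assume that for every Borel probability measure μ on the countable product ℕ → X there exists a Borel-measurable map ζ : Ω → (ℕ → X) whose law is μ. Let d be a probability metric on R(X), let ξ ∈ R(X) and let (ξₙ)ₙ be a sequence in R(X). Then limsup_{n→∞} d̂(ξ, ξₙ) equals the minimum, over all ξ′ ∈ R(X) and all sequences (ξₙ′)ₙ in R(X) with L(ξ′) = L(ξ) and L(ξₙ′) = L(ξₙ) for all n, of limsup_{n→∞} d(ξ′, ξₙ′); that is, limsup_{n→∞} d̂(ξ, ξₙ) ≤ limsup_{n→∞} d(ξ′, ξₙ′) for every such choice of representatives, and there exist ξ′ ∈ R(X) and (ξₙ′)ₙ with L(ξ′) = L(ξ), L(ξₙ′) = L(ξₙ) for all n, and limsup_{n→∞} d(ξ′, ξₙ′) = limsup_{n→∞} d̂(ξ, ξₙ). -/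

import Mathlib

open MeasureTheory Filter
open scoped ENNReal Topology

/-- The minimal probability metric associated with `d`:
`d̂(ξ, η) = inf { d(ξ′, η′) | ξ′, η′ measurable, L(ξ′) = L(ξ), L(η′) = L(η) }`. -/
noncomputable def minPM {Ω X : Type*} [MeasurableSpace Ω] [MeasurableSpace X]
    (P : Measure Ω) (d : (Ω → X) → (Ω → X) → ℝ≥0∞) (ξ η : Ω → X) : ℝ≥0∞ :=
  ⨅ (ξ' : Ω → X) (η' : Ω → X) (_ : Measurable ξ') (_ : Measurable η')
    (_ : Measure.map ξ' P = Measure.map ξ P) (_ : Measure.map η' P = Measure.map η P),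
    d ξ' η'

/-- A measure on a product with a standard Borel second factor is the image of its first marginal
times the uniform measure, under a map that keeps the first coordinate. -/
lemma exists_transfer {X : Type*} [MeasurableSpace X] [StandardBorelSpace X] [Nonempty X]
    (ρ : Measure (X × X)) [IsProbabilityMeasure ρ] :
    ∃ f : X × unitInterval → X, Measurable f ∧
      Measure.map (fun p : X × unitInterval => (p.1, f p)) (ρ.fst.prod volume) = ρ := by
  obtain ⟨f, hf, hfm⟩ :=
    ProbabilityTheory.Kernel.exists_measurable_map_eq_unitInterval ρ.condKernel
  refine ⟨Function.uncurry f, hf, ?_⟩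
  have hm : Measurable (fun p : X × unitInterval => (p.1, Function.uncurry f p)) :=
    measurable_fst.prodMk hf
  conv_rhs => rw [← ρ.disintegrate ρ.condKernel]
  ext s hs
  rw [Measure.map_apply hm hs, Measure.prod_apply (hm hs), Measure.compProd_apply hs]
  refine lintegral_congr fun a => ?_
  have hfa : Measurable (f a) := hf.comp measurable_prodMk_left
  rw [← hfm a, Measure.map_apply hfa (measurable_prodMk_left hs)]
  rfl

lemma minPM_le {Ω X : Type*} [MeasurableSpace Ω] [MeasurableSpace X]
    (P : Measure Ω) (d : (Ω → X) → (Ω → X) → ℝ≥0∞) (ξ η ξ' η' : Ω → X)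
    (h1 : Measurable ξ') (h2 : Measurable η') (h3 : Measure.map ξ' P = Measure.map ξ P)
    (h4 : Measure.map η' P = Measure.map η P) : minPM P d ξ η ≤ d ξ' η' :=
  iInf_le_of_le ξ' <| iInf_le_of_le η' <| iInf_le_of_le h1 <| iInf_le_of_le h2 <|
    iInf_le_of_le h3 <| iInf_le_of_le h4 le_rfl

lemma exists_near_minPM {Ω X : Type*} [MeasurableSpace Ω] [MeasurableSpace X]
    (P : Measure Ω) (d : (Ω → X) → (Ω → X) → ℝ≥0∞) (ξ η : Ω → X)
    (hξ : Measurable ξ) (hη : Measurable η) (ε : ℝ≥0∞) (hε : ε ≠ 0) :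
    ∃ ξ' η' : Ω → X, Measurable ξ' ∧ Measurable η' ∧ Measure.map ξ' P = Measure.map ξ P ∧
      Measure.map η' P = Measure.map η P ∧ d ξ' η' ≤ minPM P d ξ η + ε := by
  by_cases h : minPM P d ξ η = ∞
  · exact ⟨ξ, η, hξ, hη, rfl, rfl, by simp [h]⟩
  · have hlt : minPM P d ξ η < minPM P d ξ η + ε := ENNReal.lt_add_right h hε
    conv_lhs at hlt => unfold minPM
    simp only [iInf_lt_iff] at hlt
    obtain ⟨ξ', η', h1, h2, h3, h4, h5⟩ := hlt
    exact ⟨ξ', η', h1, h2, h3, h4, h5.le⟩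

/-- Assume every Borel probability measure on `ℕ → X` is the law of
some random variable. Let `d` be a probability metric on `R(X)`, `ξ ∈ R(X)` and
`(ξₙ)ₙ` a sequence in `R(X)`. Then `limsup_{n} d̂(ξ, ξₙ)` is the minimum, over all
representatives `ξ′, (ξₙ′)ₙ` with `L(ξ′) = L(ξ)` and `L(ξₙ′) = L(ξₙ)`, of
`limsup_{n} d(ξ′, ξₙ′)`: it is a lower bound, and the bound is attained. -/
theorem limsup_minPM_eq_min_limsup
    {Ω X : Type*} [MeasurableSpace Ω]
    [TopologicalSpace X] [PolishSpace X] [MeasurableSpace X] [BorelSpace X]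
    (P : Measure Ω) [IsProbabilityMeasure P]
    (hrich : ∀ μ : Measure (ℕ → X), IsProbabilityMeasure μ →
      ∃ ζ : Ω → ℕ → X, Measurable ζ ∧ Measure.map ζ P = μ)
    (d : (Ω → X) → (Ω → X) → ℝ≥0∞)
    (hrefl : ∀ ξ : Ω → X, Measurable ξ → d ξ ξ = 0)
    (hsymm : ∀ ξ η : Ω → X, Measurable ξ → Measurable η → d ξ η = d η ξ)
    (htri : ∀ ξ η ζ : Ω → X, Measurable ξ → Measurable η → Measurable ζ →
      d ξ η ≤ d ξ ζ + d ζ η)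
    (hPM : ∀ ξ η ξ' η' : Ω → X, Measurable ξ → Measurable η →
      Measurable ξ' → Measurable η' →
      Measure.map (fun ω => (ξ ω, η ω)) P = Measure.map (fun ω => (ξ' ω, η' ω)) P →
      d ξ η = d ξ' η')
    (ξ : Ω → X) (hξ : Measurable ξ)
    (ξs : ℕ → Ω → X) (hξs : ∀ n, Measurable (ξs n)) :
    (∀ (ξ' : Ω → X) (ξs' : ℕ → Ω → X), Measurable ξ' → (∀ n, Measurable (ξs' n)) →
      Measure.map ξ' P = Measure.map ξ P →
      (∀ n, Measure.map (ξs' n) P = Measure.map (ξs n) P) →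
      Filter.limsup (fun n => minPM P d ξ (ξs n)) atTop ≤
        Filter.limsup (fun n => d ξ' (ξs' n)) atTop) ∧
    (∃ (ξ' : Ω → X) (ξs' : ℕ → Ω → X), Measurable ξ' ∧ (∀ n, Measurable (ξs' n)) ∧
      Measure.map ξ' P = Measure.map ξ P ∧
      (∀ n, Measure.map (ξs' n) P = Measure.map (ξs n) P) ∧
      Filter.limsup (fun n => d ξ' (ξs' n)) atTop =
        Filter.limsup (fun n => minPM P d ξ (ξs n)) atTop) := by
  have hΩ : Nonempty Ω := nonempty_of_isProbabilityMeasure P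
  have hX : Nonempty X := hΩ.map ξ
  refine ⟨?_, ?_⟩
  · intro ξ' ξs' h1 h2 h3 h4
    exact limsup_le_limsup (Eventually.of_forall fun n =>
      minPM_le P d ξ (ξs n) ξ' (ξs' n) h1 (h2 n) h3 (h4 n))
  -- near-optimal couplings
  have hε : ∀ n : ℕ, ((n : ℝ≥0∞))⁻¹ ≠ 0 := fun n => by simp
  choose a b ha hb haξ hbξ hab using fun n : ℕ =>
    exists_near_minPM P d ξ (ξs n) hξ (hξs n) ((n : ℝ≥0∞))⁻¹ (hε n)
  have hprob : ∀ n, IsProbabilityMeasure (Measure.map (fun ω => (a n ω, b n ω)) P) := fun n =>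
    Measure.isProbabilityMeasure_map ((ha n).prodMk (hb n)).aemeasurable
  choose f hf hfm using fun n => exists_transfer (Measure.map (fun ω => (a n ω, b n ω)) P)
  have hfst : ∀ n, (Measure.map (fun ω => (a n ω, b n ω)) P).fst = Measure.map ξ P := fun n => by
    rw [Measure.fst_map_prodMk (hb n), haξ n]
  have hprobξ : IsProbabilityMeasure (Measure.map ξ P) :=
    Measure.isProbabilityMeasure_map hξ.aemeasurable
  -- the glued law
  let g : X × unitInterval → ℕ → X := fun p n => Nat.casesOn n p.1 (fun k => f k p)
  have hg : Measurable g := by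
    refine measurable_pi_lambda _ fun n => ?_
    cases n with
    | zero => exact measurable_fst
    | succ k => exact hf k
  obtain ⟨ζ, hζ, hζm⟩ := hrich (Measure.map g ((Measure.map ξ P).prod volume))
    (Measure.isProbabilityMeasure_map hg.aemeasurable)
  have hζn : ∀ n, Measurable (fun ω => ζ ω n) := fun n => (measurable_pi_apply n).comp hζ
  have hpair : ∀ n, Measure.map (fun ω => (ζ ω 0, ζ ω (n + 1))) P
      = Measure.map (fun ω => (a n ω, b n ω)) P := by
    intro n
    have hπ : Measurable (fun z : ℕ → X => (z 0, z (n + 1))) :=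
      (measurable_pi_apply 0).prodMk (measurable_pi_apply (n + 1))
    have h1 := Measure.map_map (μ := P) hπ hζ
    rw [hζm, Measure.map_map hπ hg] at h1
    have h2 := hfm n
    rw [hfst n] at h2
    exact h1.symm.trans h2
  have h0 : Measure.map (fun ω => ζ ω 0) P = Measure.map ξ P := by
    rw [← hfst 0, ← hpair 0, Measure.fst_map_prodMk (hζn 1)]
  have hn : ∀ n, Measure.map (fun ω => ζ ω (n + 1)) P = Measure.map (ξs n) P := fun n => by
    rw [← Measure.snd_map_prodMk (μ := P) (hζn 0), hpair n, Measure.snd_map_prodMk (ha n), hbξ n]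
  refine ⟨fun ω => ζ ω 0, fun n ω => ζ ω (n + 1), hζn 0, fun n => hζn _, h0, hn, ?_⟩
  refine le_antisymm ?_ (limsup_le_limsup (Eventually.of_forall fun n =>
      minPM_le P d ξ (ξs n) _ _ (hζn 0) (hζn (n + 1)) h0 (hn n)))
  calc limsup (fun n => d (fun ω => ζ ω 0) (fun ω => ζ ω (n + 1))) atTop
      ≤ limsup ((fun n => minPM P d ξ (ξs n)) + fun n : ℕ => ((n : ℝ≥0∞))⁻¹) atTop := by
        refine limsup_le_limsup (Eventually.of_forall fun n => ?_)
        have := hPM _ _ _ _ (hζn 0) (hζn (n + 1)) (ha n) (hb n) (hpair n)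
        simpa only [Pi.add_apply, this] using hab n
    _ = limsup (fun n => minPM P d ξ (ξs n)) atTop :=
        ENNReal.limsup_add_of_right_tendsto_zero ENNReal.tendsto_inv_nat_nhds_zero _
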